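/- arXiv:2210.03009 — 2 statements merged into one kernel-verified Lean document; each statement's English description precedes it below -/
import Mathlib

section
/- For every Λ > 0 and every (x, y) with x ≥ 0 and y ≥ 0 (including points on the diagonal x = y), the limit lim_{ε→0⁺} ρ_{ε,Λ}(x, y) exists. -/
open MeasureTheory Topology Filter

/-- The one-dimensional heat kernel `h_t(u) = (4πt)^(−1/2) · exp(−u²/(4t))`. -/
noncomputable def heat (t u : ℝ) : ℝ :=
  (Real.sqrt (4 * Real.pi * t))⁻¹ * Real.exp (-(u ^ 2) / (4 * t))

/-- The `u`-derivative of the heat kernel, `h_t′(u) = −(u/(2t)) · h_t(u)`. -/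
noncomputable def heat' (t u : ℝ) : ℝ := -(u / (2 * t)) * heat t u

/-- `(φh_t)′(u) = φ′(u)·h_t(u) + φ(u)·h_t′(u)`. -/
noncomputable def phiHeat' (φ : ℝ → ℝ) (t u : ℝ) : ℝ :=
  deriv φ u * heat t u + φ u * heat' t u

/-- The scalar propagator kernel
`ρ_{ε,Λ}(x, y) = −(1/2) ∫_ε^Λ [(φh_t)′(x − y) + (φh_t)′(x + y)] dt`. -/
noncomputable def rho (φ : ℝ → ℝ) (ε Λ x y : ℝ) : ℝ :=
  -(1 / 2) * ∫ t in ε..Λ, (phiHeat' φ t (x - y) + phiHeat' φ t (x + y))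

/-- `ρ̄_Λ(x, y) = lim_{ε→0⁺} ρ_{ε,Λ}(x, y)` (whenever the limit exists). -/
noncomputable def rhoBar (φ : ℝ → ℝ) (Λ x y : ℝ) : ℝ :=
  limUnder (𝓝[>] (0 : ℝ)) (fun ε => rho φ ε Λ x y)

/-!
By definition `h_t(0) = (4πt)^(-1/2)`, which is integrable at `t = 0` and dominates `h_t(u)`. With
`s = u² / (4t)` one has `u · h_t′(u) = -2 · s e^{-s} · h_t(0)`, and `s e^{-s}` is bounded; so for
`u ≠ 0` the function `t ↦ h_t′(u)` is integrable at `t = 0`, while on the diagonal `h_t′(0) = 0`.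
The integral defining `ρ_{ε,Λ}(x, y)` therefore converges at its lower endpoint, and the limit is
`ρ_{0,Λ}(x, y)`.
-/

section Primitive

variable {E : Type*} [NormedAddCommGroup E] [NormedSpace ℝ E] {μ : Measure ℝ}
  [NullSingletonClass μ] {f : ℝ → E} {a b : ℝ}

theorem tendsto_intervalIntegral_left_nhdsGT (hf : IntervalIntegrable f μ a b) (hab : a < b) :
    Tendsto (fun ε => ∫ t in ε..b, f t ∂μ) (𝓝[>] a) (𝓝 (∫ t in a..b, f t ∂μ)) := by
  have hcont : ContinuousOn (fun ε => ∫ t in b..ε, f t ∂μ) (Set.uIcc a b) :=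
    intervalIntegral.continuousOn_primitive_interval' hf Set.right_mem_uIcc
  have hright : 𝓝[>] a ≤ 𝓝[Set.uIcc a b] a := by
    rw [Set.uIcc_of_le hab.le, nhdsWithin_Icc_eq_nhdsGE hab]
    exact nhdsWithin_mono a Set.Ioi_subset_Ici_self
  simp only [intervalIntegral.integral_symm b]
  exact ((hcont a Set.left_mem_uIcc).mono_left hright).neg

end Primitive

section HeatKernel

variable {t a b : ℝ}

theorem heat_eq_heat_zero_mul_exp (t u : ℝ) :
    heat t u = heat t 0 * Real.exp (-(u ^ 2 / (4 * t))) := by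
  simp [heat, neg_div]

theorem heat_nonneg (t u : ℝ) : 0 ≤ heat t u := by
  unfold heat
  positivity

theorem heat_le_heat_zero (ht : 0 ≤ t) (u : ℝ) : heat t u ≤ heat t 0 := by
  rw [heat_eq_heat_zero_mul_exp]
  refine mul_le_of_le_one_right (heat_nonneg t 0) (Real.exp_le_one_iff.2 ?_)
  exact neg_nonpos.2 (by positivity)

theorem heat'_zero_right (t : ℝ) : heat' t 0 = 0 := by
  simp [heat']

theorem mul_heat'_eq (t u : ℝ) :
    u * heat' t u =
      -(2 * (u ^ 2 / (4 * t) * Real.exp (-(u ^ 2 / (4 * t)))) * heat t 0) := by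
  rw [heat', heat_eq_heat_zero_mul_exp]
  ring

theorem abs_mul_heat'_le (ht : 0 ≤ t) (u : ℝ) :
    |u * heat' t u| ≤ 2 * Real.exp (-1) * heat t 0 := by
  have hpos := heat_nonneg t 0
  rw [mul_heat'_eq, abs_neg, abs_of_nonneg (by positivity)]
  gcongr
  exact Real.mul_exp_neg_le_exp_neg_one _

theorem heat_zero_eq_rpow (ht : 0 ≤ t) :
    heat t 0 = (√(4 * Real.pi))⁻¹ * t ^ (-(1 / 2) : ℝ) := by
  simp [heat, Real.rpow_neg ht, Real.sqrt_eq_rpow, Real.mul_rpow, ht, Real.pi_nonneg, mul_comm]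

theorem pos_of_mem_uIoc (ha : 0 ≤ a) (hb : 0 ≤ b) (ht : t ∈ Set.uIoc a b) : 0 < t :=
  (le_min ha hb).trans_lt ht.1

theorem intervalIntegrable_heat_zero (ha : 0 ≤ a) (hb : 0 ≤ b) :
    IntervalIntegrable (fun t => heat t 0) volume a b := by
  have hrpow : IntervalIntegrable (fun t : ℝ => t ^ (-(1 / 2) : ℝ)) volume a b :=
    intervalIntegral.intervalIntegrable_rpow' (by norm_num)
  exact (hrpow.const_mul (√(4 * Real.pi))⁻¹).congr fun t ht =>
    (heat_zero_eq_rpow (pos_of_mem_uIoc ha hb ht).le).symm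

theorem intervalIntegrable_of_abs_le_heat_zero {f : ℝ → ℝ} {C : ℝ} (ha : 0 ≤ a) (hb : 0 ≤ b)
    (hf : Measurable f) (hle : ∀ t, 0 < t → |f t| ≤ C * heat t 0) :
    IntervalIntegrable f volume a b := by
  refine ((intervalIntegrable_heat_zero ha hb).const_mul C).mono_fun' hf.aestronglyMeasurable ?_
  filter_upwards [ae_restrict_mem measurableSet_uIoc] with t ht
  exact hle t (pos_of_mem_uIoc ha hb ht)

theorem intervalIntegrable_heat (ha : 0 ≤ a) (hb : 0 ≤ b) (u : ℝ) :
    IntervalIntegrable (fun t => heat t u) volume a b := by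
  have hmeas : Measurable fun t => heat t u := by
    unfold heat
    fun_prop
  refine intervalIntegrable_of_abs_le_heat_zero (C := 1) ha hb hmeas fun t ht => ?_
  rw [abs_of_nonneg (heat_nonneg t u), one_mul]
  exact heat_le_heat_zero ht.le u

theorem intervalIntegrable_heat' (ha : 0 ≤ a) (hb : 0 ≤ b) (u : ℝ) :
    IntervalIntegrable (fun t => heat' t u) volume a b := by
  rcases eq_or_ne u 0 with rfl | hu
  · simp only [heat'_zero_right, intervalIntegrable_const]
  have hmeas : Measurable fun t => u * heat' t u := by
    unfold heat' heat
    fun_prop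
  have hmul : IntervalIntegrable (fun t => u * heat' t u) volume a b :=
    intervalIntegrable_of_abs_le_heat_zero ha hb hmeas fun t ht => abs_mul_heat'_le ht.le u
  simpa only [inv_mul_cancel_left₀ hu] using hmul.const_mul u⁻¹

theorem intervalIntegrable_phiHeat' (φ : ℝ → ℝ) (ha : 0 ≤ a) (hb : 0 ≤ b) (u : ℝ) :
    IntervalIntegrable (fun t => phiHeat' φ t u) volume a b :=
  ((intervalIntegrable_heat ha hb u).const_mul (deriv φ u)).add
    ((intervalIntegrable_heat' ha hb u).const_mul (φ u))

end HeatKernel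

theorem stmt6_general (φ : ℝ → ℝ) {Λ : ℝ} (hΛ : 0 < Λ) (x y : ℝ) :
    Tendsto (fun ε => rho φ ε Λ x y) (𝓝[>] (0 : ℝ)) (𝓝 (rho φ 0 Λ x y)) := by
  have hint : IntervalIntegrable (fun t => phiHeat' φ t (x - y) + phiHeat' φ t (x + y))
      volume 0 Λ :=
    (intervalIntegrable_phiHeat' φ le_rfl hΛ.le (x - y)).add
      (intervalIntegrable_phiHeat' φ le_rfl hΛ.le (x + y))
  exact (tendsto_intervalIntegral_left_nhdsGT hint hΛ).const_mul (-(1 / 2))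

/-- For every `Λ > 0` and every `x, y ≥ 0` (including the diagonal), the limit
`lim_{ε→0⁺} ρ_{ε,Λ}(x, y)` exists. -/
theorem stmt6 (φ : ℝ → ℝ) (hφ : ContDiff ℝ (⊤ : ℕ∞) φ) (hsupp : HasCompactSupport φ)
    (heven : ∀ x, φ (-x) = φ x) (δ : ℝ) (hδ : 0 < δ) (hone : ∀ x, |x| < δ → φ x = 1)
    (Λ : ℝ) (hΛ : 0 < Λ) (x y : ℝ) (hx : 0 ≤ x) (hy : 0 ≤ y) :
    ∃ l : ℝ, Tendsto (fun ε => rho φ ε Λ x y) (𝓝[>] (0 : ℝ)) (𝓝 l) :=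
  ⟨_, stmt6_general φ hΛ x y⟩
end

section
/- For every Λ > 0, the corner values of the extended propagator kernel are: lim_{(x,y)→(0,0), 0 ≤ x < y} ρ̄_Λ(x, y) = 0 and lim_{(x,y)→(0,0), 0 ≤ y < x} ρ̄_Λ(x, y) = 1/2; both limits exist and are independent of Λ and of the cutoff φ. -/
open MeasureTheory Topology Filter

/-!
Near the origin the cutoff is identically `1`, so only `∫_ε^Λ h_t′(u) dt` matters, and this is
explicit because `t ↦ erf(u / (2√t)) / 2` is a primitive of `t ↦ h_t′(u)`. Its value at
`t = ε` tends to `sign u / 2` as `ε → 0⁺`, whence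
`ρ̄_Λ(x, y) = (sign(x - y) + sign(x + y) - erf((x - y) / (2√Λ)) - erf((x + y) / (2√Λ))) / 4`
for small `x` and `y`. The `erf` terms vanish continuously at the corner, and the signs cancel for
`|x| < y` but add up to `2` for `|y| < x`.
-/

/-- The error function `erf v = (2/√π) ∫₀^v exp(−s²) ds`, which expresses the time integrals of
`heat'` in closed form. -/
noncomputable def erf (v : ℝ) : ℝ := 2 / √Real.pi * ∫ s in 0..v, Real.exp (-s ^ 2)

lemma hasDerivAt_erf (v : ℝ) : HasDerivAt erf (2 / √Real.pi * Real.exp (-v ^ 2)) v := by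
  have hcont : Continuous fun s : ℝ => Real.exp (-s ^ 2) := by fun_prop
  exact (hcont.integral_hasStrictDerivAt 0 v).hasDerivAt.const_mul _

lemma continuous_erf : Continuous erf :=
  continuous_iff_continuousAt.2 fun v => (hasDerivAt_erf v).continuousAt

lemma erf_zero : erf 0 = 0 := by simp [erf]

lemma erf_neg (v : ℝ) : erf (-v) = -erf v := by
  have hreflect := intervalIntegral.integral_comp_neg (a := 0) (b := v)
    fun s : ℝ => Real.exp (-s ^ 2)
  simp only [neg_sq, neg_zero] at hreflect
  rw [erf, erf, intervalIntegral.integral_symm, ← hreflect, mul_neg]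

lemma tendsto_erf_atTop : Tendsto erf atTop (𝓝 1) := by
  have hint : Integrable fun s : ℝ => Real.exp (-s ^ 2) := by
    simpa using integrable_exp_neg_mul_sq one_pos
  have hgauss : ∫ s in Set.Ioi (0 : ℝ), Real.exp (-s ^ 2) = √Real.pi / 2 := by
    simpa using integral_gaussian_Ioi 1
  have hlim := (intervalIntegral_tendsto_integral_Ioi 0 hint.integrableOn tendsto_id).const_mul
    (2 / √Real.pi)
  rwa [hgauss, div_mul_div_comm, mul_comm, div_self (by positivity)] at hlim

lemma tendsto_erf_atBot : Tendsto erf atBot (𝓝 (-1)) :=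
  (tendsto_erf_atTop.comp tendsto_neg_atBot_atTop).neg.congr fun v => by simp [erf_neg]

lemma tendsto_inv_two_mul_sqrt_nhdsGT_zero :
    Tendsto (fun ε : ℝ => (2 * √ε)⁻¹) (𝓝[>] 0) atTop := by
  refine Tendsto.inv_tendsto_nhdsGT_zero (tendsto_nhdsWithin_iff.2 ⟨?_, ?_⟩)
  · have hcont : Continuous fun ε : ℝ => 2 * √ε := by fun_prop
    exact (hcont.tendsto' 0 0 (by simp)).mono_left nhdsWithin_le_nhds
  · filter_upwards [self_mem_nhdsWithin] with ε hε
    exact mul_pos two_pos (Real.sqrt_pos.2 hε)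

lemma tendsto_erf_div_sqrt_nhdsGT_zero (u : ℝ) :
    Tendsto (fun ε : ℝ => erf (u / (2 * √ε))) (𝓝[>] 0) (𝓝 (Real.sign u)) := by
  rcases lt_trichotomy u 0 with hu | rfl | hu
  · rw [Real.sign_of_neg hu]
    exact tendsto_erf_atBot.comp (tendsto_inv_two_mul_sqrt_nhdsGT_zero.const_mul_atTop_of_neg hu)
  · simp [erf_zero]
  · rw [Real.sign_of_pos hu]
    exact tendsto_erf_atTop.comp (tendsto_inv_two_mul_sqrt_nhdsGT_zero.const_mul_atTop hu)

lemma hasDerivAt_div_two_mul_sqrt (u : ℝ) {t : ℝ} (ht : 0 < t) :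
    HasDerivAt (fun t => u / (2 * √t)) (-(u / (4 * t * √t))) t := by
  refine ((hasDerivAt_const t u).div ((Real.hasDerivAt_sqrt ht.ne').const_mul 2)
    (by positivity)).congr_deriv ?_
  rw [mul_pow, Real.sq_sqrt ht.le]
  field_simp
  ring

lemma heat_eq_exp_neg_div_sq (u : ℝ) {t : ℝ} (ht : 0 ≤ t) :
    heat t u = (2 * √Real.pi * √t)⁻¹ * Real.exp (-(u / (2 * √t)) ^ 2) := by
  have hfour : √(4 : ℝ) = 2 := by rw [Real.sqrt_eq_iff_mul_self_eq] <;> norm_num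
  rw [heat, Real.sqrt_mul (by positivity), Real.sqrt_mul zero_le_four, hfour, div_pow, mul_pow,
    Real.sq_sqrt ht, neg_div]
  norm_num

lemma hasDerivAt_erf_div_sqrt (u : ℝ) {t : ℝ} (ht : 0 < t) :
    HasDerivAt (fun t => erf (u / (2 * √t)) / 2) (heat' t u) t := by
  refine (((hasDerivAt_erf _).comp t (hasDerivAt_div_two_mul_sqrt u ht)).div_const 2).congr_deriv ?_
  rw [heat', heat_eq_exp_neg_div_sq u ht.le]
  field_simp
  ring

lemma continuousOn_heat' (u : ℝ) : ContinuousOn (fun t => heat' t u) (Set.Ioi 0) := by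
  intro t (ht : 0 < t)
  have hsqrt : √(4 * Real.pi * t) ≠ 0 := by positivity
  unfold heat' heat
  fun_prop (disch := first | assumption | positivity)

section

variable {ε Λ : ℝ}

lemma intervalIntegrable_heat'_s11 (u : ℝ) (hε : 0 < ε) (hΛ : 0 < Λ) :
    IntervalIntegrable (fun t => heat' t u) volume ε Λ :=
  ((continuousOn_heat' u).mono fun _ ht => (lt_min hε hΛ).trans_le ht.1).intervalIntegrable

lemma integral_heat' (u : ℝ) (hε : 0 < ε) (hΛ : 0 < Λ) :
    ∫ t in ε..Λ, heat' t u = erf (u / (2 * √Λ)) / 2 - erf (u / (2 * √ε)) / 2 :=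
  intervalIntegral.integral_eq_sub_of_hasDerivAt
    (fun _ ht => hasDerivAt_erf_div_sqrt u ((lt_min hε hΛ).trans_le ht.1))
    (intervalIntegrable_heat'_s11 u hε hΛ)

variable {φ : ℝ → ℝ}

lemma phiHeat'_eq_heat' {u : ℝ} (hu : φ =ᶠ[𝓝 u] 1) (t : ℝ) : phiHeat' φ t u = heat' t u := by
  simp [phiHeat', hu.deriv_eq, hu.eq_of_nhds]

variable {x y : ℝ}

lemma rho_eq_erf (hε : 0 < ε) (hΛ : 0 < Λ) (hsub : φ =ᶠ[𝓝 (x - y)] 1)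
    (hadd : φ =ᶠ[𝓝 (x + y)] 1) :
    rho φ ε Λ x y = (erf ((x - y) / (2 * √ε)) + erf ((x + y) / (2 * √ε)) -
      erf ((x - y) / (2 * √Λ)) - erf ((x + y) / (2 * √Λ))) / 4 := by
  simp only [rho, phiHeat'_eq_heat' hsub, phiHeat'_eq_heat' hadd]
  rw [intervalIntegral.integral_add (intervalIntegrable_heat'_s11 _ hε hΛ)
    (intervalIntegrable_heat'_s11 _ hε hΛ), integral_heat' _ hε hΛ, integral_heat' _ hε hΛ]
  ring

lemma tendsto_rho_nhdsGT_zero (hΛ : 0 < Λ) (hsub : φ =ᶠ[𝓝 (x - y)] 1)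
    (hadd : φ =ᶠ[𝓝 (x + y)] 1) :
    Tendsto (fun ε => rho φ ε Λ x y) (𝓝[>] 0)
      (𝓝 ((Real.sign (x - y) + Real.sign (x + y) -
        erf ((x - y) / (2 * √Λ)) - erf ((x + y) / (2 * √Λ))) / 4)) := by
  refine Tendsto.congr' ?_ (((((tendsto_erf_div_sqrt_nhdsGT_zero (x - y)).add
    (tendsto_erf_div_sqrt_nhdsGT_zero (x + y))).sub_const _).sub_const _).div_const 4)
  filter_upwards [self_mem_nhdsWithin] with ε hε
  exact (rho_eq_erf hε hΛ hsub hadd).symm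

lemma rhoBar_eq_sign_sub_erf (hΛ : 0 < Λ) (hsub : φ =ᶠ[𝓝 (x - y)] 1)
    (hadd : φ =ᶠ[𝓝 (x + y)] 1) :
    rhoBar φ Λ x y = (Real.sign (x - y) + Real.sign (x + y) -
      erf ((x - y) / (2 * √Λ)) - erf ((x + y) / (2 * √Λ))) / 4 :=
  (tendsto_rho_nhdsGT_zero hΛ hsub hadd).limUnder_eq

lemma tendsto_rhoBar_sub_sign (hφ : φ =ᶠ[𝓝 0] 1) (hΛ : 0 < Λ) :
    Tendsto (fun p : ℝ × ℝ =>
        rhoBar φ Λ p.1 p.2 - (Real.sign (p.1 - p.2) + Real.sign (p.1 + p.2)) / 4)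
      (𝓝 (0, 0)) (𝓝 0) := by
  have herf := continuous_erf
  have hcont : Continuous fun p : ℝ × ℝ =>
      -(erf ((p.1 - p.2) / (2 * √Λ)) + erf ((p.1 + p.2) / (2 * √Λ))) / 4 := by fun_prop
  have hsub : Tendsto (fun p : ℝ × ℝ => p.1 - p.2) (𝓝 (0, 0)) (𝓝 0) :=
    (continuous_fst.sub continuous_snd).tendsto' _ _ (by simp)
  have hadd : Tendsto (fun p : ℝ × ℝ => p.1 + p.2) (𝓝 (0, 0)) (𝓝 0) :=
    (continuous_fst.add continuous_snd).tendsto' _ _ (by simp)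
  refine (hcont.tendsto' (0, 0) 0 (by simp [erf_zero])).congr' ?_
  filter_upwards [hsub.eventually hφ.eventuallyEq_nhds, hadd.eventually hφ.eventuallyEq_nhds]
    with p hp_sub hp_add
  rw [rhoBar_eq_sign_sub_erf hΛ hp_sub hp_add]
  ring

lemma tendsto_rhoBar_nhdsWithin (hφ : φ =ᶠ[𝓝 0] 1) (hΛ : 0 < Λ) {S : Set (ℝ × ℝ)} {c : ℝ}
    (hS : ∀ p ∈ S, (Real.sign (p.1 - p.2) + Real.sign (p.1 + p.2)) / 4 = c) :
    Tendsto (fun p : ℝ × ℝ => rhoBar φ Λ p.1 p.2) (𝓝[S] (0, 0)) (𝓝 c) := by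
  refine tendsto_sub_nhds_zero_iff.1 <|
    ((tendsto_rhoBar_sub_sign hφ hΛ).mono_left nhdsWithin_le_nhds).congr' ?_
  filter_upwards [self_mem_nhdsWithin] with p hp
  rw [hS p hp]

end

theorem stmt11_general {φ : ℝ → ℝ} (hφ : φ =ᶠ[𝓝 0] 1) {Λ : ℝ} (hΛ : 0 < Λ) :
    Tendsto (fun p : ℝ × ℝ => rhoBar φ Λ p.1 p.2)
      (𝓝[{p : ℝ × ℝ | |p.1| < p.2}] (0, 0)) (𝓝 0) ∧
    Tendsto (fun p : ℝ × ℝ => rhoBar φ Λ p.1 p.2)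
      (𝓝[{p : ℝ × ℝ | |p.2| < p.1}] (0, 0)) (𝓝 (1 / 2)) := by
  refine ⟨tendsto_rhoBar_nhdsWithin hφ hΛ fun p (hp : |p.1| < p.2) => ?_,
    tendsto_rhoBar_nhdsWithin hφ hΛ fun p (hp : |p.2| < p.1) => ?_⟩
  · obtain ⟨hneg, hlt⟩ := abs_lt.1 hp
    rw [Real.sign_of_neg (by linarith), Real.sign_of_pos (by linarith)]
    norm_num
  · obtain ⟨hneg, hlt⟩ := abs_lt.1 hp
    rw [Real.sign_of_pos (by linarith), Real.sign_of_pos (by linarith)]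
    norm_num

/-- Corner values of the extended propagator kernel: the limit of `ρ̄_Λ` at `(0, 0)`
from the sector `{0 ≤ x < y}` is `0`, and from the sector `{0 ≤ y < x}` is `1/2`;
independently of `Λ` and of the cutoff `φ`. -/
theorem stmt11 (φ : ℝ → ℝ) (hφ : ContDiff ℝ (⊤ : ℕ∞) φ) (hsupp : HasCompactSupport φ)
    (heven : ∀ x, φ (-x) = φ x) (δ : ℝ) (hδ : 0 < δ) (hone : ∀ x, |x| < δ → φ x = 1)
    (Λ : ℝ) (hΛ : 0 < Λ) :
    Tendsto (fun p : ℝ × ℝ => rhoBar φ Λ p.1 p.2)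
      (𝓝[{p : ℝ × ℝ | 0 ≤ p.1 ∧ p.1 < p.2}] ((0 : ℝ), (0 : ℝ))) (𝓝 0) ∧
    Tendsto (fun p : ℝ × ℝ => rhoBar φ Λ p.1 p.2)
      (𝓝[{p : ℝ × ℝ | 0 ≤ p.2 ∧ p.2 < p.1}] ((0 : ℝ), (0 : ℝ))) (𝓝 (1 / 2)) := by
  have hφ_one : φ =ᶠ[𝓝 0] 1 :=
    Metric.eventually_nhds_iff.2 ⟨δ, hδ, fun x hx => hone x (by simpa using hx)⟩
  exact (stmt11_general hφ_one hΛ).imp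
    (fun h => h.mono_left <| nhdsWithin_mono _ fun _ hp => by simpa [abs_of_nonneg hp.1] using hp.2)
    (fun h => h.mono_left <| nhdsWithin_mono _ fun _ hp => by simpa [abs_of_nonneg hp.1] using hp.2)
end
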